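/- arXiv:1804.00220 — 6 statements merged into one kernel-verified Lean document; each statement's English description precedes it below -/
import Mathlib

section
/- Let G and H be groups acting by homeomorphisms on connected topological manifolds M and N, and let (λ, φ) be a Morita morphism from G ⋉ M to H ⋉ N. Set K = ker λ. Then: (1) the restricted action of K on M is free; (2) the action of K on M is properly discontinuous: every x ∈ M has an open neighborhood U such that k•U ∩ U = ∅ for every k ∈ K with k ≠ e; (3) φ is surjective and the induced map φ̄ : M/K → N, K•x ↦ φ(x), is a homeomorphism from the orbit space of the K-action (with the quotient topology) onto N; (4) λ induces a group isomorphism λ̄ : G/K → H; (5) φ̄ is equivariant: φ̄(gK • (K•x)) = λ̄(gK) • φ̄(K•x) for all g ∈ G, x ∈ M. In other words, every Morita morphism factors as the quotient projection G ⋉ M → (G/K) ⋉ (M/K) followed by an isomorphism of action groupoids. -/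
/-- **Characterization Theorem.**  Let `G`, `H` be groups acting by homeomorphisms on
connected topological manifolds `M`, `N`, and let `(lam, φ)` be a Morita morphism of
action groupoids `G ⋉ M → H ⋉ N` (an equivariant continuous local homeomorphism
inducing bijections on isotropy groups and on orbit spaces).  Then, with `K = ker lam`:
the restricted `K`-action on `M` is free and properly discontinuous, `φ` is surjective
and descends to a homeomorphism `φ̄ : M/K ≃ₜ N`, `lam` descends to a group isomorphism
`λ̄ : G/K ≃* H`, and `φ̄` is `λ̄`-equivariant.  In other words, every Morita morphism
factors as the quotient projection `G ⋉ M → (G/K) ⋉ (M/K)` followed by an isomorphism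
of action groupoids. -/
theorem morita_morphism_characterization
    {G H M N : Type*} [Group G] [Group H]
    [TopologicalSpace M] [TopologicalSpace N]
    [T2Space M] [T2Space N] [ConnectedSpace M] [ConnectedSpace N]
    {m n : ℕ}
    [ChartedSpace (EuclideanSpace ℝ (Fin m)) M]
    [ChartedSpace (EuclideanSpace ℝ (Fin n)) N]
    [MulAction G M] [MulAction H N]
    (hGcont : ∀ g : G, Continuous fun x : M => g • x)
    (hHcont : ∀ h : H, Continuous fun y : N => h • y)
    (lam : G →* H) (φ : M → N) (hφ : Continuous φ)
    (hequiv : ∀ (g : G) (x : M), φ (g • x) = lam g • φ x)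
    (hloc : IsLocalHomeomorph φ)
    (hstab : ∀ x : M, Set.BijOn lam
      (MulAction.stabilizer G x : Set G) (MulAction.stabilizer H (φ x) : Set H))
    (horb_inj : ∀ x x' : M, φ x' ∈ MulAction.orbit H (φ x) → x' ∈ MulAction.orbit G x)
    (horb_surj : ∀ y : N, ∃ x : M, φ x ∈ MulAction.orbit H y) :
    (∀ k ∈ lam.ker, ∀ x : M, k • x = x → k = 1) ∧
    (∀ x : M, ∃ U : Set M, IsOpen U ∧ x ∈ U ∧
      ∀ k ∈ lam.ker, k ≠ 1 → ((fun u : M => k • u) '' U) ∩ U = ∅) ∧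
    Function.Surjective φ ∧
    (∃ (φbar : Quotient (MulAction.orbitRel ↥lam.ker M) ≃ₜ N)
       (lambar : (G ⧸ lam.ker) ≃* H),
      (∀ x : M, φbar (Quotient.mk (MulAction.orbitRel ↥lam.ker M) x) = φ x) ∧
      (∀ g : G, lambar (QuotientGroup.mk g) = lam g) ∧
      (∀ (g : G) (x : M),
        φbar (Quotient.mk (MulAction.orbitRel ↥lam.ker M) (g • x)) =
          lambar (QuotientGroup.mk g) •
            φbar (Quotient.mk (MulAction.orbitRel ↥lam.ker M) x))) := by
  have key : ∀ (h : H) (x x' : M), φ x' = h • φ x → ∃ g : G, lam g = h ∧ g • x = x' := by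
    intro h x x' hx
    obtain ⟨g, hg⟩ := horb_inj x x' ⟨h, hx.symm⟩
    have hg : g • x = x' := hg
    have h1 : h⁻¹ * lam g ∈ (MulAction.stabilizer H (φ x) : Set H) := by
      rw [SetLike.mem_coe, MulAction.mem_stabilizer_iff, mul_smul, ← hequiv, hg, hx,
        inv_smul_smul]
    obtain ⟨s, hs, hs'⟩ := (hstab x).surjOn h1
    have hs : s • x = x := hs
    refine ⟨g * s⁻¹, ?_, ?_⟩
    · rw [map_mul, map_inv, hs']; group
    · rw [mul_smul, inv_smul_eq_iff.mpr hs.symm, hg]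
  have free : ∀ k ∈ lam.ker, ∀ x : M, k • x = x → k = 1 := by
    intro k hk x hx
    apply (hstab x).injOn
    · exact hx
    · exact one_smul G x
    · rw [map_one]; exact hk
  have surj : Function.Surjective φ := by
    have hopen : IsOpen (Set.range φ) := hloc.isOpenMap.isOpen_range
    have hcompl : (Set.range φ)ᶜ =
        ⋃ h ∈ {h : H | h ∉ Set.range lam}, (fun y : N => h⁻¹ • y) ⁻¹' (Set.range φ) := by
      ext y
      simp only [Set.mem_compl_iff, Set.mem_iUnion, Set.mem_preimage, Set.mem_setOf_eq,
        exists_prop]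
      constructor
      · intro hy
        obtain ⟨x, h, hx⟩ := horb_surj y
        have hx : h • y = φ x := hx
        refine ⟨h⁻¹, ?_, x, ?_⟩
        · rintro ⟨g, hg⟩
          exact hy ⟨g • x, by rw [hequiv, hg, ← hx, inv_smul_smul]⟩
        · rw [inv_inv, hx]
      · rintro ⟨h, hh, x, hx⟩ ⟨x', hx'⟩
        obtain ⟨g, hg, -⟩ := key h x x' (by rw [hx, hx', smul_inv_smul])
        exact hh ⟨g, hg⟩
    have hclosed : IsClosed (Set.range φ) := by
      rw [← isOpen_compl_iff, hcompl]
      exact isOpen_biUnion fun h _ => hopen.preimage (hHcont h⁻¹)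
    exact Set.range_eq_univ.mp
      (IsClopen.eq_univ ⟨hclosed, hopen⟩ (Set.range_nonempty φ))
  have lsurj : Function.Surjective lam := by
    intro h
    obtain ⟨x⟩ := (inferInstance : Nonempty M)
    obtain ⟨x', hx'⟩ := surj (h • φ x)
    obtain ⟨g, hg, -⟩ := key h x x' hx'
    exact ⟨g, hg⟩
  refine ⟨free, ?_, surj, ?_⟩
  · intro x
    obtain ⟨e, hxe, he⟩ := hloc x
    refine ⟨e.source, e.open_source, hxe, ?_⟩
    intro k hk hk1
    rw [Set.eq_empty_iff_forall_notMem]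
    rintro _ ⟨⟨u, hu, rfl⟩, hku⟩
    apply hk1
    apply free k hk u
    apply e.injOn hku hu
    have hk' : lam k = 1 := hk
    rw [← he]
    simp only [hequiv, hk', one_smul]
  · have hinv : ∀ a b : M, (MulAction.orbitRel ↥lam.ker M) a b → φ a = φ b := by
      rintro a b ⟨k, hk⟩
      have hk : (k : G) • b = a := hk
      have hk' : lam (k : G) = 1 := k.2
      rw [← hk, hequiv, hk', one_smul]
    let f : Quotient (MulAction.orbitRel ↥lam.ker M) → N := Quotient.lift φ hinv
    have fc : Continuous f := hφ.quotient_lift hinv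
    have fo : IsOpenMap f := by
      intro U hU
      have : f '' U = φ '' (Quotient.mk _ ⁻¹' U) := by
        ext y
        constructor
        · rintro ⟨q, hq, rfl⟩
          induction q using Quotient.inductionOn with
          | h a => exact ⟨a, hq, rfl⟩
        · rintro ⟨a, ha, rfl⟩
          exact ⟨_, ha, rfl⟩
      rw [this]
      exact hloc.isOpenMap _ (hU.preimage continuous_quot_mk)
    have fb : Function.Bijective f := by
      constructor
      · intro p q
        induction p using Quotient.inductionOn with
        | h a =>
          induction q using Quotient.inductionOn with
          | h b =>
            intro hab
            have hab : φ a = φ b := hab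
            obtain ⟨k, hk, hkb⟩ := key 1 b a (by rw [hab, one_smul])
            exact Quotient.sound ⟨⟨k, hk⟩, hkb⟩
      · intro y
        obtain ⟨x, hx⟩ := surj y
        exact ⟨Quotient.mk _ x, hx⟩
    refine ⟨(Equiv.ofBijective f fb).toHomeomorphOfContinuousOpen fc fo,
      QuotientGroup.quotientKerEquivOfSurjective lam lsurj, fun x => rfl, fun g => rfl, ?_⟩
    intro g x
    exact hequiv g x
end

section
/- Let G and H be groups acting by homeomorphisms on topological spaces M and N with M nonempty and N connected, let λ : G → H be a group homomorphism, and let φ : M → N be a continuous open map with φ(g•x) = λ(g)•φ(x) for all g, x. Assume: (a) every H-orbit in N meets the image φ(M); and (b) whenever z, z' ∈ M and h ∈ H satisfy h•φ(z) = φ(z'), there exists g ∈ G with λ(g) = h. Then φ is surjective. -/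
/-- Let `G`, `H` act by homeomorphisms on spaces `M`, `N`, with `M` nonempty and `N`
connected, let `lam : G → H` be a group homomorphism and `φ : M → N` an equivariant
continuous open map.  If every `H`-orbit in `N` meets the image of `φ`, and whenever
`h • φ z = φ z'` the element `h` lies in the image of `lam`, then `φ` is surjective. -/
theorem equivariant_open_map_surjective
    {G H M N : Type*} [Group G] [Group H]
    [TopologicalSpace M] [TopologicalSpace N]
    [Nonempty M] [ConnectedSpace N]
    [MulAction G M] [MulAction H N]
    (hGcont : ∀ g : G, Continuous fun x : M => g • x)
    (hHcont : ∀ h : H, Continuous fun y : N => h • y)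
    (lam : G →* H) (φ : M → N) (hφ : Continuous φ) (hopen : IsOpenMap φ)
    (hequiv : ∀ (g : G) (x : M), φ (g • x) = lam g • φ x)
    (horb : ∀ y : N, ∃ (x : M) (h : H), φ x = h • y)
    (hful : ∀ (z z' : M) (h : H), h • φ z = φ z' → ∃ g : G, lam g = h) :
    Function.Surjective φ := by
  have hclosed : IsClosed (Set.range φ) := by
    rw [← isOpen_compl_iff, isOpen_iff_forall_mem_open]
    intro y hy
    obtain ⟨x, h, hx⟩ := horb y
    refine ⟨(fun y : N => h • y) ⁻¹' Set.range φ, ?_,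
      hopen.isOpen_range.preimage (hHcont h), ⟨x, hx⟩⟩
    rintro _ ⟨z', hz'⟩ ⟨z, rfl⟩
    obtain ⟨g, hg⟩ := hful z z' h hz'.symm
    apply hy
    refine ⟨g⁻¹ • x, ?_⟩
    rw [hequiv, map_inv, hg, hx, inv_smul_smul]
  have hcl : IsClopen (Set.range φ) := ⟨hclosed, hopen.isOpen_range⟩
  exact Set.range_eq_univ.mp (hcl.eq_univ (Set.range_nonempty φ))
end

section
/- Let G and H be groups acting by homeomorphisms on connected topological manifolds M and N with N simply connected, and let (λ, φ) be a Morita morphism from G ⋉ M to H ⋉ N. Then φ : M → N is a homeomorphism and λ : G → H is a group isomorphism; that is, a Morita morphism into an action groupoid over a simply connected manifold is necessarily an isomorphism of action groupoids. -/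
/-- A Morita morphism of action groupoids `G ⋉ M → H ⋉ N` between actions of groups by
homeomorphisms on connected topological manifolds, with `N` simply connected, is an
isomorphism of action groupoids: `φ` is a homeomorphism and `lam` is a group
isomorphism. -/
theorem morita_morphism_into_simply_connected_is_isomorphism
    {G H M N : Type*} [Group G] [Group H]
    [TopologicalSpace M] [TopologicalSpace N]
    [T2Space M] [T2Space N] [ConnectedSpace M] [ConnectedSpace N]
    [SimplyConnectedSpace N]
    {m n : ℕ}
    [ChartedSpace (EuclideanSpace ℝ (Fin m)) M]
    [ChartedSpace (EuclideanSpace ℝ (Fin n)) N]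
    [MulAction G M] [MulAction H N]
    (hGcont : ∀ g : G, Continuous fun x : M => g • x)
    (hHcont : ∀ h : H, Continuous fun y : N => h • y)
    (lam : G →* H) (φ : M → N) (hφ : Continuous φ)
    (hequiv : ∀ (g : G) (x : M), φ (g • x) = lam g • φ x)
    (hloc : IsLocalHomeomorph φ)
    (hstab : ∀ x : M, Set.BijOn lam
      (MulAction.stabilizer G x : Set G) (MulAction.stabilizer H (φ x) : Set H))
    (horb_inj : ∀ x x' : M, φ x' ∈ MulAction.orbit H (φ x) → x' ∈ MulAction.orbit G x)
    (horb_surj : ∀ y : N, ∃ x : M, φ x ∈ MulAction.orbit H y) :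
    IsHomeomorph φ ∧ Function.Bijective lam := by
  have key : ∀ (h : H) (x x' : M), h • φ x = φ x' → ∃ g : G, lam g = h ∧ g • x = x' := by
    intro h x x' e
    obtain ⟨g, hg⟩ := horb_inj x x' ⟨h, e⟩
    simp only at hg
    have h1 : (lam g)⁻¹ * h ∈ (MulAction.stabilizer H (φ x) : Set H) := by
      simp only [SetLike.mem_coe, MulAction.mem_stabilizer_iff, mul_smul, e]
      rw [← hg, hequiv, inv_smul_smul]
    obtain ⟨s, hs, hs'⟩ := (hstab x).surjOn h1
    refine ⟨g * s, by rw [map_mul, hs']; group, ?_⟩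
    rw [mul_smul, MulAction.mem_stabilizer_iff.mp hs, hg]
  have hsurj : Function.Surjective φ := by
    have hop : IsOpen (Set.range φ) := hloc.isOpenMap.isOpen_range
    have hcl : IsClosed (Set.range φ) := by
      rw [← isOpen_compl_iff, isOpen_iff_forall_mem_open]
      intro y hy
      obtain ⟨x, h, hx⟩ := horb_surj y
      simp only at hx
      refine ⟨(fun z => h • z) ⁻¹' Set.range φ, ?_, hop.preimage (hHcont h), ⟨x, hx.symm⟩⟩
      rintro z ⟨x', hx'⟩ ⟨x'', rfl⟩
      obtain ⟨g, rfl, -⟩ := key h x'' x' hx'.symm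
      exact hy ⟨g⁻¹ • x, by rw [hequiv, map_inv, ← hx, inv_smul_smul]⟩
    have hne : (Set.range φ).Nonempty := Set.range_nonempty φ
    exact Set.range_eq_univ.mp (IsClopen.eq_univ ⟨hcl, hop⟩ hne)
  have hq : IsQuotientCoveringMap φ lam.ker := 
    { toIsQuotientMap := hloc.isOpenMap.isQuotientMap hφ hsurj
      continuous_const_smul := fun g => hGcont g.1
      apply_eq_iff_mem_orbit := by
        intro a b
        constructor
        · intro e
          obtain ⟨g, hg, hg'⟩ := key 1 b a (by rw [one_smul, e])
          exact ⟨⟨g, hg⟩, hg'⟩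
        · rintro ⟨⟨g, hg⟩, rfl⟩
          change φ (g • b) = φ b
          rw [hequiv, MonoidHom.mem_ker.mp hg, one_smul]
      disjoint := by
        intro x
        obtain ⟨U, hUo, hxU, hinj⟩ := hloc.isLocallyInjective x
        refine ⟨U, hUo.mem_nhds hxU, ?_⟩
        rintro ⟨g, hg⟩ ⟨_, ⟨u, hu, rfl⟩, hgu⟩
        change g • u ∈ U at hgu
        have hg1 := MonoidHom.mem_ker.mp hg
        have : g • u = u := hinj hgu hu (by rw [hequiv, hg1, one_smul])
        apply Subtype.ext
        exact (hstab u).injOn (MulAction.mem_stabilizer_iff.mpr this) (one_mem _)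
          (by rw [hg1, Subgroup.coe_one, map_one]) }
  have hcov : IsCoveringMap φ := hq.isCoveringMap
  have : LocallyPathConnectedSpace N :=
    ChartedSpace.locallyPathConnectedSpace (EuclideanSpace ℝ (Fin n)) N
  obtain ⟨x0⟩ : Nonempty M := inferInstance
  obtain ⟨s, ⟨hs0, hs⟩, -⟩ :=
    hcov.existsUnique_continuousMap_lifts (ContinuousMap.id N) (φ x0) x0 rfl
  have hsφ : s ∘ φ = id := by
    refine hcov.eq_of_comp_eq (s.continuous.comp hφ) continuous_id ?_ x0 hs0
    ext x
    exact congrFun hs (φ x)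
  have hinj : Function.Injective φ := fun a b e => by
    have := congrArg s e
    rwa [show s (φ a) = a from congrFun hsφ a, show s (φ b) = b from congrFun hsφ b] at this
  refine ⟨⟨hφ, hloc.isOpenMap, hinj, hsurj⟩, ?_, ?_⟩
  · rw [injective_iff_map_eq_one]
    intro g hg
    have : g • x0 = x0 := hinj (by rw [hequiv, hg, one_smul])
    exact (hstab x0).injOn (MulAction.mem_stabilizer_iff.mpr this) (one_mem _)
      (by rw [hg, map_one])
  · intro h
    obtain ⟨x', hx'⟩ := hsurj (h • φ x0)
    obtain ⟨g, hg, -⟩ := key h x0 x' hx'.symm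
    exact ⟨g, hg⟩
end

section
/- Let M and N be connected topological manifolds, let f : M → M and g : N → N be homeomorphisms, and consider the ℤ-actions n•x = fⁿ(x) on M and n•y = gⁿ(y) on N. Let (λ, φ) be a Morita morphism from ℤ ⋉ M to ℤ ⋉ N. If for some (equivalently, any) basepoint y₀ ∈ N every group homomorphism from the fundamental group π₁(N, y₀) to ℤ is trivial, then λ is either the identity or the negation automorphism of ℤ (λ(1) = 1 or λ(1) = -1), and φ : M → N is a homeomorphism; in particular φ ∘ f = g ∘ φ or φ ∘ f = g⁻¹ ∘ φ. -/
/-- The group of self-homeomorphisms of a space, with `(f * g) x = f (g x)`. -/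
instance homeomorphGroup {E : Type*} [TopologicalSpace E] : Group (E ≃ₜ E) where
  mul f g := g.trans f
  one := Homeomorph.refl E
  inv := Homeomorph.symm
  mul_assoc f g h := by ext x; rfl
  one_mul f := by ext x; rfl
  mul_one f := by ext x; rfl
  inv_mul_cancel f := Homeomorph.self_trans_symm f

/-- Let `f`, `g` be homeomorphisms of connected topological manifolds `M`, `N`, acting
on them by iteration, and let `(lam, φ)` be a Morita morphism of action groupoids
`ℤ ⋉ M → ℤ ⋉ N`.  If every group homomorphism `π₁(N, y₀) → ℤ` is trivial, then `lam` is
either the identity or the negation automorphism of `ℤ`, and `φ` is a homeomorphism; in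
particular `φ ∘ f = g ∘ φ` or `φ ∘ f = g⁻¹ ∘ φ`. -/
theorem morita_morphism_of_dynamics_H1_trivial
    {M N : Type*}
    [TopologicalSpace M] [TopologicalSpace N]
    [T2Space M] [T2Space N] [ConnectedSpace M] [ConnectedSpace N]
    {m n : ℕ}
    [ChartedSpace (EuclideanSpace ℝ (Fin m)) M]
    [ChartedSpace (EuclideanSpace ℝ (Fin n)) N]
    (f : M ≃ₜ M) (g : N ≃ₜ N)
    (lam : ℤ →+ ℤ) (φ : M → N) (hφ : Continuous φ)
    (hequiv : ∀ (k : ℤ) (x : M), φ ((f ^ k) x) = (g ^ (lam k)) (φ x))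
    (hloc : IsLocalHomeomorph φ)
    (hstab : ∀ x : M, Set.BijOn lam
      {k : ℤ | (f ^ k) x = x} {k : ℤ | (g ^ k) (φ x) = φ x})
    (horb_inj : ∀ x x' : M, (∃ k : ℤ, (g ^ k) (φ x) = φ x') → ∃ k : ℤ, (f ^ k) x = x')
    (horb_surj : ∀ y : N, ∃ (x : M) (k : ℤ), (g ^ k) y = φ x)
    (y₀ : N)
    (hH1 : ∀ h : FundamentalGroup N y₀ →* Multiplicative ℤ, h = 1) :
    IsHomeomorph φ ∧
      ((lam 1 = 1 ∧ ∀ x : M, φ (f x) = g (φ x)) ∨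
       (lam 1 = -1 ∧ ∀ x : M, φ (f x) = g.symm (φ x))) := by
  have gadd : ∀ (a b : ℤ) (y : N), (g ^ (a + b)) y = (g ^ a) ((g ^ b) y) := by
    intro a b y
    rw [zpow_add]; rfl
  have fadd : ∀ (a b : ℤ) (y : M), (f ^ (a + b)) y = (f ^ a) ((f ^ b) y) := by
    intro a b y
    rw [zpow_add]; rfl
  have gzero : ∀ y : N, (g ^ (0 : ℤ)) y = y := by
    intro y
    rw [zpow_zero]; rfl
  have gmove : ∀ (a b : ℤ) (y z : N), (g ^ a) y = (g ^ b) z → (g ^ (a - b)) y = z := by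
    intro a b y z h
    have h1 : (g ^ (-b + a)) y = (g ^ (-b + b)) z := by rw [gadd, gadd, h]
    rw [neg_add_cancel, gzero] at h1
    rw [← h1]; congr 2; ring
  have hlam : ∀ k : ℤ, lam k = k * lam 1 := by
    intro k
    have := map_zsmul lam k 1
    simpa using this
  -- returning times are divisible by `lam 1`
  have hret : ∀ (k : ℤ) (x x' : M), (g ^ k) (φ x) = φ x' → lam 1 ∣ k := by
    intro k x x' h
    obtain ⟨j, hj⟩ := horb_inj x x' ⟨k, h⟩
    have h1 : (g ^ k) (φ x) = (g ^ (lam j)) (φ x) := by rw [h, ← hj, hequiv]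
    have h2 := gmove _ _ _ _ h1
    obtain ⟨i, -, hi⟩ := (hstab x).surjOn h2
    have h3 : k = (i + j) * lam 1 := by
      rw [hlam i, hlam j] at hi
      linarith
    exact ⟨i + j, by rw [h3, mul_comm]⟩
  have hopen : ∀ k : ℤ, IsOpen ((fun y => (g ^ k) y) ⁻¹' Set.range φ) := fun k =>
    hloc.isOpenMap.isOpen_range.preimage (g ^ k).continuous
  let A : Set N := ⋃ k ∈ {k : ℤ | lam 1 ∣ k}, (fun y => (g ^ k) y) ⁻¹' Set.range φ
  let B : Set N := ⋃ k ∈ {k : ℤ | ¬ lam 1 ∣ k}, (fun y => (g ^ k) y) ⁻¹' Set.range φ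
  have hA : IsOpen A := isOpen_biUnion fun k _ => hopen k
  have hB : IsOpen B := isOpen_biUnion fun k _ => hopen k
  have hAB : A ∪ B = Set.univ := by
    apply Set.eq_univ_of_forall
    intro y
    obtain ⟨x, k, hk⟩ := horb_surj y
    by_cases h : lam 1 ∣ k
    · exact Or.inl (Set.mem_biUnion (x := k) h ⟨x, hk.symm⟩)
    · exact Or.inr (Set.mem_biUnion (x := k) h ⟨x, hk.symm⟩)
  obtain ⟨x₀⟩ : Nonempty M := inferInstance
  have hunit : lam 1 ∣ 1 := by
    by_contra hn
    have hAne : A.Nonempty :=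
      ⟨φ x₀, Set.mem_biUnion (x := (0 : ℤ)) (dvd_zero _) ⟨x₀, (gzero _).symm⟩⟩
    have hBne : B.Nonempty := by
      refine ⟨(g ^ (-1 : ℤ)) (φ x₀), Set.mem_biUnion (x := (1 : ℤ)) hn ⟨x₀, ?_⟩⟩
      change φ x₀ = (g ^ (1 : ℤ)) ((g ^ (-1 : ℤ)) (φ x₀))
      rw [← gadd, add_neg_cancel, gzero]
    obtain ⟨y, hyA, hyB⟩ := nonempty_inter hA hB hAB hAne hBne
    obtain ⟨k, hk, x, hx⟩ := Set.mem_iUnion₂.1 hyA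
    obtain ⟨l, hl, x', hx'⟩ := Set.mem_iUnion₂.1 hyB
    change φ x = (g ^ k) y at hx
    change φ x' = (g ^ l) y at hx'
    have h1 : (g ^ (l - k)) (φ x) = φ x' := by
      rw [hx, hx', ← gadd, sub_add_cancel]
    have h2 := hret _ _ _ h1
    exact hl ((dvd_sub_left hk).1 h2)
  have hd : lam 1 = 1 ∨ lam 1 = -1 := Int.isUnit_iff.1 (isUnit_of_dvd_one hunit)
  have hsq : lam 1 * lam 1 = 1 := by rcases hd with h | h <;> rw [h] <;> norm_num
  have hinj : Function.Injective φ := by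
    intro x x' h
    obtain ⟨j, hj⟩ := horb_inj x x' ⟨0, by rw [gzero, h]⟩
    have h1 : (g ^ (lam j)) (φ x) = φ x := by rw [← hequiv, hj, h]
    obtain ⟨i, hi, hij⟩ := (hstab x).surjOn h1
    have : i = j := by
      rw [hlam i, hlam j] at hij
      calc i = i * lam 1 * lam 1 := by rw [mul_assoc, hsq, mul_one]
        _ = j * lam 1 * lam 1 := by rw [hij]
        _ = j := by rw [mul_assoc, hsq, mul_one]
    subst this
    exact Eq.trans (Eq.symm hi) hj
  have hsurj : Function.Surjective φ := by
    intro y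
    obtain ⟨x, k, hk⟩ := horb_surj y
    refine ⟨(f ^ (-k * lam 1)) x, ?_⟩
    rw [hequiv, ← hk, hlam, mul_assoc, hsq, mul_one, ← gadd, neg_add_cancel, gzero]
  refine ⟨⟨hφ, hloc.isOpenMap, hinj, hsurj⟩, ?_⟩
  rcases hd with h | h
  · refine Or.inl ⟨h, fun x => ?_⟩
    have := hequiv 1 x
    rwa [h, zpow_one, zpow_one] at this
  · refine Or.inr ⟨h, fun x => ?_⟩
    have := hequiv 1 x
    rwa [h, zpow_one, zpow_neg_one] at this
end

section
/- Let τ₁ and τ₂ be irrational real numbers, and for i = 1, 2 consider the action of ℤ × ℤ on ℝ given by (m,n)•ᵢx = x + m·τᵢ + n. Then the following are equivalent: (i) there exist a group automorphism λ of ℤ × ℤ and a homeomorphism φ : ℝ → ℝ such that φ((m,n)•₁x) = λ(m,n)•₂φ(x) for all m, n ∈ ℤ and x ∈ ℝ; (ii) there exist integers a, b, c, d with a·d − b·c = ±1 such that τ₁ = (a·τ₂ + b)/(c·τ₂ + d). -/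
theorem aux_ratio (τ α β : ℝ) 
    (h : ∀ m n : ℤ, 0 < (m : ℝ) * τ + n → 0 < (m : ℝ) * α + n * β) : 0 < β ∧ α = τ * β := by
  have hβ : 0 < β := by simpa using h 0 1 (by simp)
  refine ⟨hβ, ?_⟩
  suffices hs : α / β = τ by rw [← hs]; field_simp
  rcases lt_trichotomy (α / β) τ with hlt | heq | hgt
  · exfalso
    obtain ⟨r, h1, h2⟩ := exists_rat_btwn hlt
    have hq : (0 : ℝ) < r.den := by exact_mod_cast r.den_pos
    rw [Rat.cast_def] at h1 h2
    rw [div_lt_div_iff₀ hβ hq] at h1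
    rw [div_lt_iff₀ hq] at h2
    have := h r.den (-r.num) (by push_cast; linarith)
    push_cast at this
    linarith
  · exact heq
  · exfalso
    obtain ⟨r, h1, h2⟩ := exists_rat_btwn hgt
    have hq : (0 : ℝ) < r.den := by exact_mod_cast r.den_pos
    rw [Rat.cast_def] at h1 h2
    rw [lt_div_iff₀ hq] at h1
    rw [div_lt_div_iff₀ hq hβ] at h2
    have := h (-r.den) (r.num) (by push_cast; linarith)
    push_cast at this
    linarith

theorem aux_lin (f : (ℤ × ℤ) ≃+ (ℤ × ℤ)) (m n : ℤ) :
    f (m, n) = (m * (f (1, 0)).1 + n * (f (0, 1)).1, m * (f (1, 0)).2 + n * (f (0, 1)).2) := by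
  have : ((m, n) : ℤ × ℤ) = m • (1, 0) + n • (0, 1) := by ext <;> simp
  rw [this, map_add, map_zsmul, map_zsmul]
  ext <;> simp

/-- **Geometric Rieffel theorem.**  For irrational `τ₁`, `τ₂`, the lifted actions of the
corresponding irrational rotations, `(m,n)•ᵢx = x + m*τᵢ + n` of `ℤ × ℤ` on `ℝ`, are
isomorphic (by a group automorphism `λ` of `ℤ × ℤ` and a `λ`-equivariant homeomorphism
`φ` of `ℝ`) if and only if `τ₁` and `τ₂` are in the same orbit of the `GL₂(ℤ)`-action by
homographies `τ ↦ (a*τ + b)/(c*τ + d)`. -/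
theorem irrational_rotations_morita_iff_homographic
    (τ₁ τ₂ : ℝ) (h₁ : Irrational τ₁) (h₂ : Irrational τ₂) :
    (∃ (lam : (ℤ × ℤ) ≃+ (ℤ × ℤ)) (φ : ℝ ≃ₜ ℝ),
      ∀ (m n : ℤ) (x : ℝ),
        φ (x + (m : ℝ) * τ₁ + (n : ℝ)) =
          φ x + ((lam (m, n)).1 : ℝ) * τ₂ + ((lam (m, n)).2 : ℝ)) ↔
    (∃ a b c d : ℤ, (a * d - b * c = 1 ∨ a * d - b * c = -1) ∧
      τ₁ = ((a : ℝ) * τ₂ + (b : ℝ)) / ((c : ℝ) * τ₂ + (d : ℝ))) := by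
  constructor
  · rintro ⟨lam, φ, h⟩
    have hl := aux_lin lam
    have hm := lam.symm_apply_apply
    have e1 := hm (1, 0)
    have e2 := hm (0, 1)
    rw [show lam (1, 0) = ((lam (1, 0)).1, (lam (1, 0)).2) from rfl, aux_lin lam.symm] at e1
    rw [show lam (0, 1) = ((lam (0, 1)).1, (lam (0, 1)).2) from rfl, aux_lin lam.symm] at e2
    simp only [Prod.mk.injEq] at e1 e2
    set a := (lam (1, 0)).1
    set b := (lam (1, 0)).2
    set c := (lam (0, 1)).1
    set d := (lam (0, 1)).2
    set a' := (lam.symm (1, 0)).1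
    set b' := (lam.symm (1, 0)).2
    set c' := (lam.symm (0, 1)).1
    set d' := (lam.symm (0, 1)).2
    obtain ⟨e11, e12⟩ := e1
    obtain ⟨e21, e22⟩ := e2
    have hdet : (a * d - b * c) * (a' * d' - b' * c') = 1 := by
      have : (a * d - b * c) * (a' * d' - b' * c') =
        (a * a' + b * c') * (c * b' + d * d') - (a * b' + b * d') * (c * a' + d * c') := by ring
      rw [this, e11, e12, e21, e22]; norm_num
    refine ⟨a, b, c, d, Int.eq_one_or_neg_one_of_mul_eq_one hdet, ?_⟩
    have key : ∀ m n : ℤ, φ ((m : ℝ) * τ₁ + n) =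
        φ 0 + (m * ((a : ℝ) * τ₂ + b) + n * ((c : ℝ) * τ₂ + d)) := by
      intro m n
      have := h m n 0
      rw [hl m n, zero_add] at this
      rw [this]; push_cast; ring
    rcases φ.continuous.strictMono_of_inj φ.injective with hφ | hφ
    · obtain ⟨hβ, he⟩ := aux_ratio τ₁ ((a : ℝ) * τ₂ + b) ((c : ℝ) * τ₂ + d) (by
        intro m n hp
        have := hφ hp
        rw [key] at this
        linarith)
      rw [he, mul_div_assoc, div_self hβ.ne', mul_one]
    · obtain ⟨hβ, he⟩ := aux_ratio τ₁ (-((a : ℝ) * τ₂ + b)) (-((c : ℝ) * τ₂ + d)) (by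
        intro m n hp
        have := hφ hp
        rw [key] at this
        linarith)
      rw [eq_div_iff (by linarith)]
      linarith
  · rintro ⟨a, b, c, d, hdet, ht⟩
    have hβ : (c : ℝ) * τ₂ + d ≠ 0 := by
      intro h0
      rw [h0, div_zero] at ht
      exact h₁.ne_zero ht
    have he : (a * d - b * c) * (a * d - b * c) = 1 := by
      rcases hdet with h | h <;> rw [h] <;> norm_num
    rw [eq_div_iff hβ] at ht
    refine ⟨{ toFun := fun p => (p.1 * a + p.2 * c, p.1 * b + p.2 * d)
              invFun := fun p => ((a * d - b * c) * (d * p.1 - c * p.2),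
                (a * d - b * c) * (a * p.2 - b * p.1))
              left_inv := ?_
              right_inv := ?_
              map_add' := ?_ }, Homeomorph.mulRight₀ _ hβ, ?_⟩
    · rintro ⟨m, n⟩
      ext
      · simp only; linear_combination m * he
      · simp only; linear_combination n * he
    · rintro ⟨m, n⟩
      ext
      · simp only; linear_combination m * he
      · simp only; linear_combination n * he
    · rintro ⟨m, n⟩ ⟨m', n'⟩
      ext
      · simp only [Prod.mk_add_mk]; ring
      · simp only [Prod.mk_add_mk]; ring
    · intro m n x
      simp only [Homeomorph.coe_mulRight₀, AddEquiv.coe_mk, Equiv.coe_fn_mk]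
      push_cast
      linear_combination (m : ℝ) * ht
end

section
/- Let τ₁ and τ₂ be irrational real numbers, let a, b, c, d be integers with (c, d) ≠ (0, 0), and let φ : ℝ → ℝ be a continuous map satisfying φ(x + m·τ₁ + n) = φ(x) + m·(a·τ₂ + b) + n·(c·τ₂ + d) for all x ∈ ℝ and all m, n ∈ ℤ. Then c·τ₂ + d ≠ 0 and τ₁ = (a·τ₂ + b)/(c·τ₂ + d). -/
/-- Key step in the classification of irrational rotations: if `τ₁`, `τ₂` are irrational,
`(c, d) ≠ (0, 0)`, and a continuous `φ : ℝ → ℝ` satisfies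
`φ (x + m*τ₁ + n) = φ x + m*(a*τ₂ + b) + n*(c*τ₂ + d)` for all `x ∈ ℝ`, `m n ∈ ℤ`, then
`c*τ₂ + d ≠ 0` and `τ₁ = (a*τ₂ + b)/(c*τ₂ + d)`. -/
theorem homography_relation_of_equivariant_map
    (τ₁ τ₂ : ℝ) (h₁ : Irrational τ₁) (h₂ : Irrational τ₂)
    (a b c d : ℤ) (hcd : (c, d) ≠ ((0 : ℤ), (0 : ℤ)))
    (φ : ℝ → ℝ) (hφ : Continuous φ)
    (hequiv : ∀ (x : ℝ) (m n : ℤ),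
      φ (x + (m : ℝ) * τ₁ + (n : ℝ)) =
        φ x + (m : ℝ) * ((a : ℝ) * τ₂ + (b : ℝ)) + (n : ℝ) * ((c : ℝ) * τ₂ + (d : ℝ))) :
    (c : ℝ) * τ₂ + (d : ℝ) ≠ 0 ∧
      τ₁ = ((a : ℝ) * τ₂ + (b : ℝ)) / ((c : ℝ) * τ₂ + (d : ℝ)) := by
  have hB : (c : ℝ) * τ₂ + (d : ℝ) ≠ 0 := by
    intro h
    by_cases hc : c = 0
    · subst hc
      apply hcd
      have : (d : ℝ) = 0 := by simpa using h
      have hd : d = 0 := by exact_mod_cast this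
      rw [hd]
    · exact ((h₂.intCast_mul hc).add_intCast d).ne_zero h
  refine ⟨hB, ?_⟩
  rw [eq_div_iff hB]
  generalize (c : ℝ) * τ₂ + (d : ℝ) = B at *
  generalize (a : ℝ) * τ₂ + (b : ℝ) = A at *
  have hper : Function.Periodic (fun x => φ x - B * x) 1 := by
    intro x
    have := hequiv x 0 1
    simp only [Int.cast_zero, Int.cast_one, zero_mul, add_zero, one_mul] at this
    simp only [this]
    ring
  have hbd := hper.isBounded_of_continuous one_ne_zero (by fun_prop)
  obtain ⟨C, hC⟩ := hbd.exists_norm_le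
  have key : ∀ m : ℕ, (m : ℝ) * |A - τ₁ * B| ≤ 2 * C := by
    intro m
    have e := hequiv 0 m 0
    have h0 := hC _ ⟨0, rfl⟩
    have hm := hC _ ⟨(m : ℝ) * τ₁, rfl⟩
    simp only [Int.cast_zero, Int.cast_natCast, zero_mul, add_zero, zero_add] at e
    simp only [e, Real.norm_eq_abs] at h0 hm
    have : (m : ℝ) * |A - τ₁ * B| = |(m : ℝ) * (A - τ₁ * B)| := by
      rw [abs_mul, Nat.abs_cast]
    rw [this]
    rw [abs_le] at *
    constructor <;> linarith [h0.1, h0.2, hm.1, hm.2]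
  by_contra hne
  have hpos : 0 < |A - τ₁ * B| := abs_pos.mpr (fun h => hne (by linarith))
  obtain ⟨m, hm⟩ := exists_nat_gt (2 * C / |A - τ₁ * B|)
  rw [div_lt_iff₀ hpos] at hm
  linarith [key m]
end
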